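/- Let Θ ⊆ ℝ^n be a nearly convex set, and let F : ℝ^n ⇒ ℝ^p and G : ℝ^n ⇒ ℝ^q be nearly convex set-valued mappings with ri(dom F) ∩ ri(dom G) ∩ ri Θ ≠ ∅. Define Φ : ℝ^n × ℝ^q ⇒ ℝ^p by Φ(x, y) = F(x) if x ∈ Θ and y ∈ G(x), and Φ(x, y) = ∅ otherwise. Then Φ is a nearly convex set-valued mapping. -/

import Mathlib

/-!
The graph of the composite mapping is the preimage of `Θ × gph F × gph G` under the linear map
`((x, y), z) ↦ (x, (x, z), (x, y))`, and products of nearly convex sets are nearly convex.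

A preimage `f ⁻¹' s` under an affine map remains nearly convex as soon as it meets
`f ⁻¹' (ri s)`: by the line segment principle, points of `s` are joined to points of `ri s` by
segments lying in `ri s`, so `f ⁻¹' (ri s)` is convex and each point of `f ⁻¹' s` is in its closure.

The range of the linear map meets the relative interior of the product because
`ri (f '' s) ⊆ f '' (ri s)`; applied to the projections `dom F = fst '' gph F` and
`dom G = fst '' gph G`, this lifts a point of `ri (dom F) ∩ ri (dom G)` to the relative interiors
of both graphs.
-/

open Set Metric

noncomputable section

/-- A set is *nearly convex* if it lies between a convex set and its closure. -/
def NearlyConvex {E : Type*} [NormedAddCommGroup E] [NormedSpace ℝ E] (s : Set E) : Prop :=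
  ∃ C : Set E, Convex ℝ C ∧ C ⊆ s ∧ s ⊆ closure C

/-- The *relative interior* of a set: points `a ∈ s` admitting `δ > 0` with
`B(a,δ) ∩ aff s ⊆ s`. -/
def ri {E : Type*} [NormedAddCommGroup E] [NormedSpace ℝ E] (s : Set E) : Set E :=
  {a | a ∈ s ∧ ∃ δ > 0, Metric.ball a δ ∩ (affineSpan ℝ s : Set E) ⊆ s}

/-- The graph of a set-valued mapping. -/
def gph {E P : Type*} (F : E → Set P) : Set (E × P) := {q | q.2 ∈ F q.1}

/-- The domain of a set-valued mapping. -/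
def domSV {E P : Type*} (F : E → Set P) : Set E := {x | (F x).Nonempty}

open Topology

theorem mem_intrinsicInterior_iff_mem_nhdsWithin {𝕜 V P : Type*} [Ring 𝕜] [AddCommGroup V]
    [Module 𝕜 V] [TopologicalSpace P] [AddTorsor V P] {s : Set P} {x : P} :
    x ∈ intrinsicInterior 𝕜 s ↔ x ∈ s ∧ s ∈ 𝓝[affineSpan 𝕜 s] x := by
  simp only [mem_intrinsicInterior, mem_interior_iff_mem_nhds]
  constructor
  · rintro ⟨y, hy, rfl⟩
    have hys : (y : P) ∈ s := mem_preimage.1 (mem_of_mem_nhds hy)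
    exact ⟨hys, preimage_coe_mem_nhds_subtype.1 hy⟩
  · rintro ⟨hxs, hx⟩
    exact ⟨⟨x, subset_affineSpan 𝕜 s hxs⟩, preimage_coe_mem_nhds_subtype.2 hx, rfl⟩

theorem ri_eq_intrinsicInterior {E : Type*} [NormedAddCommGroup E] [NormedSpace ℝ E]
    (s : Set E) : ri s = intrinsicInterior ℝ s := by
  ext x
  rw [mem_intrinsicInterior_iff_mem_nhdsWithin, Metric.mem_nhdsWithin_iff]
  rfl

theorem intrinsicInterior_subset_of_affineSpan_eq {𝕜 V P : Type*} [Ring 𝕜] [AddCommGroup V]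
    [Module 𝕜 V] [TopologicalSpace P] [AddTorsor V P] {s t : Set P} (hst : s ⊆ t)
    (hspan : affineSpan 𝕜 s = affineSpan 𝕜 t) :
    intrinsicInterior 𝕜 s ⊆ intrinsicInterior 𝕜 t := by
  intro x hx
  rw [mem_intrinsicInterior_iff_mem_nhdsWithin] at hx ⊢
  exact ⟨hst hx.1, hspan ▸ Filter.mem_of_superset hx.2 hst⟩

section TopologicalVectorSpace

variable {E : Type*} [AddCommGroup E] [Module ℝ E] [TopologicalSpace E] [IsTopologicalAddGroup E]
  [ContinuousSMul ℝ E] {s : Set E} {a b : E}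

theorem openSegment_intrinsicInterior_intrinsicClosure_subset (hs : Convex ℝ s)
    (ha : a ∈ intrinsicInterior ℝ s) (hb : b ∈ intrinsicClosure ℝ s) :
    openSegment ℝ a b ⊆ intrinsicInterior ℝ s := by
  obtain ⟨x, hx, rfl⟩ := ha
  obtain ⟨y, hy, rfl⟩ := hb
  have : Nonempty (affineSpan ℝ s) := ⟨x⟩
  -- With `x` as origin, the affine span becomes a topological vector space.
  let e : (affineSpan ℝ s).direction ≃ᴬ[ℝ] affineSpan ℝ s := .vaddConst ℝ x
  let f : (affineSpan ℝ s).direction →ᵃ[ℝ] E := (affineSpan ℝ s).subtype.comp e.toAffineEquiv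
  have hinterior : e ⁻¹' interior ((↑) ⁻¹' s) = interior (f ⁻¹' s) :=
    e.toHomeomorph.preimage_interior _
  have hclosure : e ⁻¹' closure ((↑) ⁻¹' s) = closure (f ⁻¹' s) :=
    e.toHomeomorph.preimage_closure _
  have hx' : e.symm x ∈ interior (f ⁻¹' s) := by
    rwa [← hinterior, mem_preimage, e.apply_symm_apply]
  have hy' : e.symm y ∈ closure (f ⁻¹' s) := by
    rwa [← hclosure, mem_preimage, e.apply_symm_apply]
  have hsegment : f '' openSegment ℝ (e.symm x) (e.symm y) = openSegment ℝ (x : E) y := by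
    rw [image_openSegment]
    simp [f]
  rw [← hsegment, image_subset_iff]
  refine ((hs.affine_preimage f).openSegment_interior_closure_subset_interior hx' hy').trans ?_
  rw [← hinterior]
  exact fun v hv => mem_image_of_mem _ hv

theorem exists_mem_openSegment_of_mem_intrinsicInterior (ha : a ∈ intrinsicInterior ℝ s)
    (hb : b ∈ s) : ∃ c ∈ s, a ∈ openSegment ℝ b c := by
  obtain ⟨has, ha⟩ := mem_intrinsicInterior_iff_mem_nhdsWithin.1 ha
  have hlim : Filter.Tendsto (AffineMap.lineMap b a : ℝ → E) (𝓝 1) (𝓝[affineSpan ℝ s] a) := by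
    refine tendsto_nhdsWithin_iff.2 ⟨?_, .of_forall fun t =>
      AffineMap.lineMap_mem t (subset_affineSpan ℝ s hb) (subset_affineSpan ℝ s has)⟩
    simpa only [AffineMap.lineMap_apply_one] using
      (AffineMap.lineMap_continuous (R := ℝ) (p := b) (q := a)).tendsto 1
  obtain ⟨t, hts, ht⟩ : ∃ t : ℝ, AffineMap.lineMap b a t ∈ s ∧ 1 < t :=
    (((hlim.eventually ha).filter_mono nhdsWithin_le_nhds).and
      (self_mem_nhdsWithin (s := Ioi (1 : ℝ)))).exists
  refine ⟨AffineMap.lineMap b a t, hts, ?_⟩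
  have hmem := lineMap_mem_openSegment ℝ b (AffineMap.lineMap b a t)
    (t := t⁻¹) ⟨by positivity, inv_lt_one_of_one_lt₀ ht⟩
  rwa [AffineMap.lineMap_lineMap_right, inv_mul_cancel₀ (by positivity),
    AffineMap.lineMap_apply_one] at hmem

end TopologicalVectorSpace

theorem intrinsicInterior_eq_of_subset_of_subset_closure {E : Type*} [NormedAddCommGroup E]
    [NormedSpace ℝ E] [FiniteDimensional ℝ E] {C s : Set E} (hC : Convex ℝ C) (hCs : C ⊆ s)
    (hsC : s ⊆ closure C) : intrinsicInterior ℝ s = intrinsicInterior ℝ C := by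
  have hspan : affineSpan ℝ C = affineSpan ℝ s :=
    (affineSpan_mono ℝ hCs).antisymm <| affineSpan_le.2 <| hsC.trans <|
      closure_minimal (subset_affineSpan ℝ C) (AffineSubspace.closed_of_finiteDimensional _)
  refine Subset.antisymm (fun a ha => ?_) (intrinsicInterior_subset_of_affineSpan_eq hCs hspan)
  obtain ⟨b, hb⟩ : (intrinsicInterior ℝ C).Nonempty :=
    (closure_nonempty_iff.1 ⟨a, hsC (intrinsicInterior_subset ha)⟩).intrinsicInterior hC
  obtain ⟨c, hcs, hac⟩ :=
    exists_mem_openSegment_of_mem_intrinsicInterior ha (hCs (intrinsicInterior_subset hb))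
  have hcC : c ∈ intrinsicClosure ℝ C := (intrinsicClosure_eq_closure ℝ C).symm ▸ hsC hcs
  exact openSegment_intrinsicInterior_intrinsicClosure_subset hC hb hcC hac

namespace NearlyConvex

variable {E F : Type*} [NormedAddCommGroup E] [NormedSpace ℝ E] [NormedAddCommGroup F]
  [NormedSpace ℝ F] {s : Set E} {t : Set F}

theorem prod (hs : NearlyConvex s) (ht : NearlyConvex t) : NearlyConvex (s ×ˢ t) := by
  obtain ⟨C, hC, hCs, hsC⟩ := hs
  obtain ⟨D, hD, hDt, htD⟩ := ht
  exact ⟨C ×ˢ D, hC.prod hD, prod_mono hCs hDt, (prod_mono hsC htD).trans closure_prod_eq.ge⟩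

variable [FiniteDimensional ℝ E]

theorem intrinsicInterior_nonempty (hs : NearlyConvex s) (hne : s.Nonempty) :
    (intrinsicInterior ℝ s).Nonempty := by
  obtain ⟨C, hC, hCs, hsC⟩ := hs
  rw [intrinsicInterior_eq_of_subset_of_subset_closure hC hCs hsC]
  exact (closure_nonempty_iff.1 (hne.mono hsC)).intrinsicInterior hC

theorem openSegment_subset_intrinsicInterior (hs : NearlyConvex s) {a b : E}
    (ha : a ∈ intrinsicInterior ℝ s) (hb : b ∈ closure s) :
    openSegment ℝ a b ⊆ intrinsicInterior ℝ s := by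
  obtain ⟨C, hC, hCs, hsC⟩ := hs
  rw [intrinsicInterior_eq_of_subset_of_subset_closure hC hCs hsC] at ha ⊢
  refine openSegment_intrinsicInterior_intrinsicClosure_subset hC ha ?_
  rw [intrinsicClosure_eq_closure]
  exact closure_minimal hsC isClosed_closure hb

theorem convex_intrinsicInterior (hs : NearlyConvex s) : Convex ℝ (intrinsicInterior ℝ s) :=
  convex_iff_openSegment_subset.2 fun _ ha _ hb =>
    hs.openSegment_subset_intrinsicInterior ha (subset_closure (intrinsicInterior_subset hb))

theorem intrinsicInterior_image_subset (hs : NearlyConvex s) (f : E →ᵃ[ℝ] F) :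
    intrinsicInterior ℝ (f '' s) ⊆ f '' intrinsicInterior ℝ s := by
  intro y hy
  obtain ⟨a, ha⟩ :=
    hs.intrinsicInterior_nonempty (image_nonempty.1 ⟨y, intrinsicInterior_subset hy⟩)
  obtain ⟨_, ⟨b, hb, rfl⟩, hyab⟩ := exists_mem_openSegment_of_mem_intrinsicInterior hy
    (mem_image_of_mem f (intrinsicInterior_subset ha))
  rw [← image_openSegment] at hyab
  exact image_mono (hs.openSegment_subset_intrinsicInterior ha (subset_closure hb)) hyab

theorem preimage (hs : NearlyConvex s) (f : F →ᵃ[ℝ] E)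
    (hf : (f ⁻¹' intrinsicInterior ℝ s).Nonempty) : NearlyConvex (f ⁻¹' s) := by
  obtain ⟨a, ha⟩ := hf
  refine ⟨f ⁻¹' intrinsicInterior ℝ s, hs.convex_intrinsicInterior.affine_preimage f,
    preimage_mono intrinsicInterior_subset, fun b hb => ?_⟩
  have hab : openSegment ℝ a b ⊆ f ⁻¹' intrinsicInterior ℝ s := by
    rw [← image_subset_iff, image_openSegment]
    exact hs.openSegment_subset_intrinsicInterior ha (subset_closure hb)
  exact closure_mono hab (segment_subset_closure_openSegment (right_mem_segment ℝ a b))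

end NearlyConvex

section SetValued

variable {E P Q : Type*}

theorem image_fst_gph (F : E → Set P) : Prod.fst '' gph F = domSV F := by
  ext x
  simp [gph, domSV, Set.Nonempty]

variable [NormedAddCommGroup E] [NormedSpace ℝ E] [FiniteDimensional ℝ E]
  [NormedAddCommGroup P] [NormedSpace ℝ P] [FiniteDimensional ℝ P]
  [NormedAddCommGroup Q] [NormedSpace ℝ Q] [FiniteDimensional ℝ Q]

theorem exists_mem_intrinsicInterior_gph {F : E → Set P} (hF : NearlyConvex (gph F)) {x : E}
    (hx : x ∈ intrinsicInterior ℝ (domSV F)) : ∃ y, (x, y) ∈ intrinsicInterior ℝ (gph F) := by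
  rw [← image_fst_gph] at hx
  obtain ⟨⟨_, y⟩, hy, rfl⟩ :=
    hF.intrinsicInterior_image_subset (LinearMap.fst ℝ E P).toAffineMap hx
  exact ⟨y, hy⟩

theorem composite_nearlyConvex_general {Θ : Set E} {F : E → Set P} {G : E → Set Q}
    (hΘ : NearlyConvex Θ) (hF : NearlyConvex (gph F)) (hG : NearlyConvex (gph G))
    (hqc : (ri (domSV F) ∩ ri (domSV G) ∩ ri Θ).Nonempty) :
    NearlyConvex (gph fun xy : E × Q => {z | xy.1 ∈ Θ ∧ xy.2 ∈ G xy.1 ∧ z ∈ F xy.1}) := by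
  simp only [ri_eq_intrinsicInterior] at hqc
  obtain ⟨x, ⟨hxF, hxG⟩, hxΘ⟩ := hqc
  obtain ⟨z, hz⟩ := exists_mem_intrinsicInterior_gph hF hxF
  obtain ⟨y, hy⟩ := exists_mem_intrinsicInterior_gph hG hxG
  let π : (E × Q) × P →ₗ[ℝ] E := .fst ℝ E Q ∘ₗ .fst ℝ (E × Q) P
  let f : (E × Q) × P →ₗ[ℝ] E × (E × P) × (E × Q) :=
    π.prod ((π.prod (.snd ℝ (E × Q) P)).prod (.fst ℝ (E × Q) P))
  have hpre : gph (fun xy : E × Q => {z | xy.1 ∈ Θ ∧ xy.2 ∈ G xy.1 ∧ z ∈ F xy.1}) =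
      f.toAffineMap ⁻¹' (Θ ×ˢ gph F ×ˢ gph G) := by
    ext w
    exact and_congr_right' and_comm
  have hf : f.toAffineMap ((x, y), z) ∈ intrinsicInterior ℝ (Θ ×ˢ gph F ×ˢ gph G) := by
    simp only [intrinsicInterior_prod_eq]
    exact ⟨hxΘ, hz, hy⟩
  rw [hpre]
  exact (hΘ.prod (hF.prod hG)).preimage f.toAffineMap ⟨_, hf⟩

end SetValued

theorem composite_nearlyConvex (n p q : ℕ)
    (Θ : Set (EuclideanSpace ℝ (Fin n)))
    (F : EuclideanSpace ℝ (Fin n) → Set (EuclideanSpace ℝ (Fin p)))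
    (G : EuclideanSpace ℝ (Fin n) → Set (EuclideanSpace ℝ (Fin q)))
    (hΘ : NearlyConvex Θ) (hF : NearlyConvex (gph F)) (hG : NearlyConvex (gph G))
    (hqc : (ri (domSV F) ∩ ri (domSV G) ∩ ri Θ).Nonempty) :
    NearlyConvex (gph (fun xy : EuclideanSpace ℝ (Fin n) × EuclideanSpace ℝ (Fin q) =>
      {z | xy.1 ∈ Θ ∧ xy.2 ∈ G xy.1 ∧ z ∈ F xy.1})) := by
  exact composite_nearlyConvex_general hΘ hF hG hqc
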